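/- Let Γ be a non-elementary hyperbolic group and μ a symmetric probability measure on Γ whose support generates Γ. If the Green metric d_G belongs to D(Γ), then for every sufficiently small ε>0 the harmonic measure ν is Ahlfors regular of dimension 1/ε on the boundary ∂Γ endowed with a visual metric d_ε^G of parameter ε induced by d_G; that is, ν(B(a,r)) ≍ r^{1/ε} for all a ∈ ∂Γ and 0 < r ≤ diam ∂Γ. -/

import Mathlib

open Filter MeasureTheory Topology Metric Set
open scoped ENNReal

noncomputable section

namespace GHM

/-! ### Coarse geometry of distance functions -/

/-- The Gromov product `(x|y)_w` of `x` and `y` seen from `w`, for a distance function `d`. -/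
def gromov {X : Type*} (d : X → X → ℝ) (w x y : X) : ℝ :=
  (d x w + d y w - d x y) / 2

/-- `d` is `δ`-hyperbolic (four point condition on Gromov products). -/
def IsHyperbolicWith {X : Type*} (d : X → X → ℝ) (δ : ℝ) : Prop :=
  ∀ w x y z : X, min (gromov d w x y) (gromov d w x z) - δ ≤ gromov d w y z

/-- `d` is Gromov hyperbolic. -/
def IsHyperbolic {X : Type*} (d : X → X → ℝ) : Prop :=
  ∃ δ : ℝ, 0 ≤ δ ∧ IsHyperbolicWith d δ

/-- `d` is a genuine metric. -/
structure IsMetricFun {X : Type*} (d : X → X → ℝ) : Prop where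
  refl : ∀ x, d x x = 0
  pos : ∀ x y, x ≠ y → 0 < d x y
  symm : ∀ x y, d x y = d y x
  triangle : ∀ x y z, d x z ≤ d x y + d y z

/-- `f` is a `(Λ,c)`-quasi-isometric embedding from `(X,dX)` to `(Y,dY)`. -/
def QIEmbed {X Y : Type*} (dX : X → X → ℝ) (dY : Y → Y → ℝ)
    (f : X → Y) (Λ c : ℝ) : Prop :=
  ∀ x x' : X, dX x x' / Λ - c ≤ dY (f x) (f x') ∧ dY (f x) (f x') ≤ Λ * dX x x' + c

/-- `(X,dX)` and `(Y,dY)` are quasi-isometric. -/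
def QuasiIsometric {X Y : Type*} (dX : X → X → ℝ) (dY : Y → Y → ℝ) : Prop :=
  ∃ (f : X → Y) (Λ c C : ℝ), 1 ≤ Λ ∧ 0 ≤ c ∧ 0 ≤ C ∧
    QIEmbed dX dY f Λ c ∧ ∀ y : Y, ∃ x : X, dY (f x) y ≤ C

variable {G : Type*} [Group G]

/-- Word length of `g` with respect to the (symmetrized) finite set `S`. -/
def wordLength (S : Finset G) (g : G) : ℕ :=
  sInf {n : ℕ | ∃ l : List G, l.length = n ∧ (∀ a ∈ l, a ∈ S ∨ a⁻¹ ∈ S) ∧ l.prod = g}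

/-- The word metric associated with a finite generating set `S`. -/
def wordDist (S : Finset G) (x y : G) : ℝ := wordLength S (x⁻¹ * y)

/-- `S` generates the group. -/
def Generates (S : Finset G) : Prop := Subgroup.closure (S : Set G) = ⊤

/-- The standard metric on `ℤ`. -/
def intDist (m n : ℤ) : ℝ := |(m : ℝ) - (n : ℝ)|

/-- `G` is a non-elementary hyperbolic group: finitely generated, its word metrics are
Gromov hyperbolic, it is infinite, and it is not quasi-isometric to `ℤ`. -/
def NonElemHyperbolic (G : Type*) [Group G] : Prop :=
  Infinite G ∧ (∃ S : Finset G, Generates S) ∧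
    ∀ S : Finset G, Generates S →
      IsHyperbolic (wordDist S) ∧ ¬ QuasiIsometric (wordDist S) intDist

/-- `d` is invariant under left translations. -/
def LeftInvariant (d : G → G → ℝ) : Prop := ∀ g x y : G, d (g * x) (g * y) = d x y

/-- `d` belongs to the class `𝒟(Γ)`: it is a left-invariant Gromov hyperbolic metric on the
group, quasi-isometric to a word metric of a finite generating set. -/
def MemD (d : G → G → ℝ) : Prop :=
  IsMetricFun d ∧ LeftInvariant d ∧ IsHyperbolic d ∧
    ∃ S : Finset G, Generates S ∧ QuasiIsometric d (wordDist S)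

/-! ### Random walks -/

/-- `μ` is (the density of) a probability measure on the (countable) group. -/
def IsProbDensity (μ : G → ℝ) : Prop := (∀ g, 0 ≤ μ g) ∧ HasSum μ 1

/-- `μ` is symmetric. -/
def IsSymmetric (μ : G → ℝ) : Prop := ∀ g : G, μ g⁻¹ = μ g

/-- The support of `μ` generates `G`. -/
def GeneratesSupp (μ : G → ℝ) : Prop := Subgroup.closure {g : G | μ g ≠ 0} = ⊤

open scoped Classical in
/-- Convolution powers `μ^n` of `μ`. -/
def convPow (μ : G → ℝ) : ℕ → G → ℝ
  | 0 => fun g => if g = 1 then 1 else 0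
  | n + 1 => fun g => ∑' y : G, convPow μ n y * μ (y⁻¹ * g)

/-- The Green function `G(x,y) = ∑_n μ^n(x⁻¹y)`. -/
def greenFn (μ : G → ℝ) (x y : G) : ℝ := ∑' n : ℕ, convPow μ n (x⁻¹ * y)

/-- The random walk is transient, i.e. `G(e,e) = ∑_n μ^n(e) < ∞`. -/
def Transient (μ : G → ℝ) : Prop := Summable fun n : ℕ => convPow μ n (1 : G)

/-- Successive positions of a walk started at `x` with increments `l`. -/
def walkPositions (x : G) (l : List G) : List G := l.scanl (fun p a => p * a) x

/-- The increments `l` describe a trajectory from `x` which hits `y` for the first time at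
its final position. -/
def IsFirstHitPath (x y : G) (l : List G) : Prop :=
  (walkPositions x l).getLast? = some y ∧ y ∉ (walkPositions x l).dropLast

/-- `F(x,y)`: the probability that the `μ`-random walk started at `x` ever hits `y`. -/
def hitProb (μ : G → ℝ) (x y : G) : ℝ :=
  ∑' l : {l : List G // IsFirstHitPath x y l}, ((l : List G).map μ).prod

/-- The Green metric `d_G(x,y) = - log F(x,y)`. -/
def greenDist (μ : G → ℝ) (x y : G) : ℝ := - Real.log (hitProb μ x y)

/-- `μ` has a finite first moment with respect to `d`. -/
def FiniteFirstMoment (d : G → G → ℝ) (μ : G → ℝ) : Prop :=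
  Summable fun g : G => d 1 g * μ g

/-- `μ` has an exponential moment with respect to `d`. -/
def HasExpMoment (d : G → G → ℝ) (μ : G → ℝ) : Prop :=
  ∃ lam : ℝ, 0 < lam ∧ Summable fun g : G => Real.exp (lam * d 1 g) * μ g

/-- The entropy `H(μ^n) = -∑_γ μ^n(γ) log μ^n(γ)` of the `n`-th convolution power. -/
def entropyAt (μ : G → ℝ) (n : ℕ) : ℝ :=
  - ∑' g : G, convPow μ n g * Real.log (convPow μ n g)

/-- `h` is the asymptotic entropy of the walk. -/
def HasEntropy (μ : G → ℝ) (h : ℝ) : Prop :=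
  Tendsto (fun n : ℕ => entropyAt μ n / n) atTop (𝓝 h)

/-- `v` is the logarithmic volume growth of `(G,d)` (seen from the identity). -/
def HasGrowth (d : G → G → ℝ) (v : ℝ) : Prop :=
  Filter.limsup (fun R : ℝ => Real.log (Nat.card {g : G // d 1 g ≤ R}) / R) atTop = v

/-- The position `Z_n = ω_0 ω_1 ⋯ ω_{n-1}` of the random walk at time `n`, given the
sequence of increments `ω`. -/
def walkPos (n : ℕ) (ω : ℕ → G) : G := ((List.range n).map ω).prod

/-- `P` is the law on the space of increment sequences of an i.i.d. sequence of law `μ`: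
cylinders have product measure.  (This characterizes the path measure of the random walk.) -/
def IsWalkMeasure [MeasurableSpace G] (μ : G → ℝ) (P : Measure (ℕ → G)) : Prop :=
  IsProbabilityMeasure P ∧
    ∀ (n : ℕ) (g : Fin n → G),
      P {ω : ℕ → G | ∀ i : Fin n, ω (i : ℕ) = g i} = ∏ i : Fin n, ENNReal.ofReal (μ (g i))

/-! ### The Gromov boundary, visual metrics, harmonic and quasiconformal measures -/

/-- A sequence tends to infinity if Gromov products (at the base point `1`) go to `∞`. -/
def TendstoInfinity (d : G → G → ℝ) (u : ℕ → G) : Prop :=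
  Tendsto (fun p : ℕ × ℕ => gromov d 1 (u p.1) (u p.2)) atTop atTop

/-- A realization of the Gromov boundary of `(G,d)` as an abstract type `B`:
`conv u b` means that the sequence `u` converges at infinity to the boundary point `b`.
The group acts on its boundary by `smul`. -/
structure BoundaryData (G : Type*) [Group G] (d : G → G → ℝ) (B : Type*) where
  conv : (ℕ → G) → B → Prop
  smul : G → B → B
  conv_unique : ∀ u b b', conv u b → conv u b' → b = b'
  exists_conv : ∀ u, TendstoInfinity d u → ∃ b, conv u b
  conv_tendstoInfinity : ∀ u b, conv u b → TendstoInfinity d u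
  conv_iff : ∀ u v b, conv u b →
    (conv v b ↔ Tendsto (fun n => gromov d 1 (u n) (v n)) atTop atTop)
  conv_surj : ∀ b, ∃ u, conv u b
  smul_conv : ∀ (γ : G) (u) (b), conv u b → conv (fun n => γ * u n) (smul γ b)

/-- Asymptotic Gromov product of two sequences. -/
def seqGromov (d : G → G → ℝ) (u v : ℕ → G) : ℝ :=
  Filter.liminf (fun n => gromov d 1 (u n) (v n)) atTop

/-- The metric of `B` is a visual metric of parameter `ε` (with comparison constant `C`)
for the hyperbolic distance `d` on the group:  `dist(a,b) ≍ exp(-ε (a|b))`. -/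
def IsVisualMetric {B : Type*} [MetricSpace B] (d : G → G → ℝ)
    (bd : BoundaryData G d B) (ε C : ℝ) : Prop :=
  0 < ε ∧ 0 < C ∧
    ∀ u v b b', bd.conv u b → bd.conv v b' → b ≠ b' →
      dist b b' ≤ C * Real.exp (-ε * seqGromov d u v) ∧
      Real.exp (-ε * seqGromov d u v) ≤ C * dist b b'

/-- `ν` is the harmonic measure of the random walk of law `μ` on the boundary `B`:
it is the law of the almost sure limit `Z_∞` of the walk on the boundary. -/
def IsHarmonicMeasure {B : Type*} [MeasurableSpace G] [MeasurableSpace B]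
    (d : G → G → ℝ) (bd : BoundaryData G d B) (μ : G → ℝ)
    (P : Measure (ℕ → G)) (ν : Measure B) : Prop :=
  IsWalkMeasure μ P ∧
    ∃ Zinf : (ℕ → G) → B, Measurable Zinf ∧
      (∀ᵐ ω ∂P, bd.conv (fun n => walkPos n ω) (Zinf ω)) ∧ ν = P.map Zinf

/-- Busemann function `β_b(x,y)` of the boundary point `b`. -/
def busemann {B : Type*} (d : G → G → ℝ) (bd : BoundaryData G d B)
    (x y : G) (b : B) : ℝ :=
  sSup {t : ℝ | ∃ u, bd.conv u b ∧
    t = Filter.limsup (fun n => d x (u n) - d y (u n)) atTop}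

/-- The image measure `γ^*ρ`, `γ^*ρ(A) = ρ(γA)`. -/
def actPush {B : Type*} [MeasurableSpace B] {d : G → G → ℝ}
    (bd : BoundaryData G d B) (γ : G) (ρ : Measure B) : Measure B :=
  ρ.map (bd.smul γ⁻¹)

/-- `ρ` is a quasiconformal measure on the boundary for `(G,d)` of logarithmic growth
parameter `v`: `γ^*ρ` and `ρ` are mutually absolutely continuous, with density
`dγ^*ρ/dρ ≍ exp (v β_b(1,γ⁻¹))` (uniformly in `γ`). -/
def IsQuasiconformalMeasure {B : Type*} [MeasurableSpace B] {d : G → G → ℝ}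
    (bd : BoundaryData G d B) (ρ : Measure B) (v : ℝ) : Prop :=
  ∃ C : ℝ, 0 < C ∧ ∀ γ : G,
    actPush bd γ ρ ≪ ρ ∧ ρ ≪ actPush bd γ ρ ∧
      ∀ᵐ b ∂ρ,
        (actPush bd γ ρ).rnDeriv ρ b
            ≤ ENNReal.ofReal (C * Real.exp (v * busemann d bd 1 γ⁻¹ b)) ∧
        ENNReal.ofReal (C⁻¹ * Real.exp (v * busemann d bd 1 γ⁻¹ b))
            ≤ (actPush bd γ ρ).rnDeriv ρ b

/-- `ν` is Ahlfors regular of dimension `α`: `ν(B(b,r)) ≍ r^α`. -/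
def AhlforsRegularOfDim {B : Type*} [MetricSpace B] [MeasurableSpace B]
    (ν : Measure B) (α : ℝ) : Prop :=
  ∃ C : ℝ, 0 < C ∧ ∀ (b : B) (r : ℝ), 0 < r → r ≤ Metric.diam (Set.univ : Set B) →
    ENNReal.ofReal (C⁻¹ * r ^ α) ≤ ν (Metric.ball b r) ∧
      ν (Metric.ball b r) ≤ ENNReal.ofReal (C * r ^ α)

/-- The Hausdorff dimension of a measure: the infimum of the Hausdorff dimensions of sets of
full measure. -/
def measureDim {B : Type*} [EMetricSpace B] [MeasurableSpace B] (ν : Measure B) : ℝ≥0∞ :=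
  ⨅ (A : Set B) (_ : ν Aᶜ = 0), dimH A

/-! ### Word geodesics -/

/-- `p 0, …, p n` is a geodesic segment for the word metric of `S`. -/
def IsWordGeodesic (S : Finset G) (n : ℕ) (p : ℕ → G) : Prop :=
  ∀ i j : ℕ, i ≤ n → j ≤ n → wordDist S (p i) (p j) = |(i : ℝ) - (j : ℝ)|

/-- `v` lies within distance `r` of some word geodesic segment from `x` to `y`. -/
def NearWordGeodesic (S : Finset G) (x y v : G) (r : ℝ) : Prop :=
  ∃ (n : ℕ) (p : ℕ → G), IsWordGeodesic S n p ∧ p 0 = x ∧ p n = y ∧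
    ∃ i ≤ n, wordDist S v (p i) ≤ r

/-! ### Martin boundary -/

/-- The Martin kernel `K(x,y) = G(x,y)/G(e,y)`. -/
def martinKernel (μ : G → ℝ) (x y : G) : ℝ := greenFn μ x y / greenFn μ 1 y

/-- The embedding `y ↦ K(·,y)` of the group in `C(G)` (pointwise topology). -/
def martinMap (μ : G → ℝ) (y : G) : G → ℝ := fun x => martinKernel μ x y

/-- The Martin boundary: the boundary of the image of the group under the Martin embedding
in the space of functions with the topology of pointwise convergence. -/
def martinBoundary (μ : G → ℝ) : Set (G → ℝ) :=
  closure (Set.range (martinMap μ)) \ Set.range (martinMap μ)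

/-- `h` is a `μ`-harmonic function. -/
def IsHarmonicFn (μ : G → ℝ) (h : G → ℝ) : Prop :=
  ∀ x : G, h x = ∑' y : G, h y * μ (x⁻¹ * y)

/-- `h` is a minimal positive harmonic function. -/
def IsMinimalHarmonic (μ : G → ℝ) (h : G → ℝ) : Prop :=
  IsHarmonicFn μ h ∧ (∀ x, 0 < h x) ∧
    ∀ u : G → ℝ, IsHarmonicFn μ u → (∀ x, 0 ≤ u x) → (∀ x, u x ≤ h x) →
      ∃ c : ℝ, u = fun x => c * h x

/-! ### Metric space versions (geodesic and quasiruled spaces) -/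

/-- A geodesic metric space. -/
def IsGeodesicSpace (X : Type*) [MetricSpace X] : Prop :=
  ∀ x y : X, ∃ f : ℝ → X, f 0 = x ∧ f (dist x y) = y ∧
    ∀ s ∈ Set.Icc (0:ℝ) (dist x y), ∀ t ∈ Set.Icc (0:ℝ) (dist x y),
      dist (f s) (f t) = |s - t|

/-- `f : [a,b] → Y` is a `(Λ,c)`-quasigeodesic segment. -/
def IsQuasigeodesicOn {Y : Type*} [MetricSpace Y] (f : ℝ → Y) (a b Λ c : ℝ) : Prop :=
  ∀ s ∈ Set.Icc a b, ∀ t ∈ Set.Icc a b,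
    |s - t| / Λ - c ≤ dist (f s) (f t) ∧ dist (f s) (f t) ≤ Λ * |s - t| + c

/-- `f : [a,b] → Y` is a `τ`-quasiruler: Gromov products of triples along it are `≤ τ`. -/
def IsQuasirulerOn {Y : Type*} [MetricSpace Y] (f : ℝ → Y) (a b τ : ℝ) : Prop :=
  ∀ s t u : ℝ, s ∈ Set.Icc a b → t ∈ Set.Icc a b → u ∈ Set.Icc a b → s ≤ t → t ≤ u →
    dist (f s) (f t) + dist (f t) (f u) ≤ dist (f s) (f u) + 2 * τ

/-- A quasiruled metric space: for some constants `(Λ,c,τ)` every pair of points is joined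
by a `(Λ,c)`-quasigeodesic, and every `(Λ,c)`-quasigeodesic is a `τ`-quasiruler. -/
def Quasiruled (Y : Type*) [MetricSpace Y] : Prop :=
  ∃ Λ c τ : ℝ, 1 ≤ Λ ∧ 0 ≤ c ∧ 0 ≤ τ ∧
    (∀ x y : Y, ∃ (a b : ℝ) (f : ℝ → Y), a ≤ b ∧ f a = x ∧ f b = y ∧
      IsQuasigeodesicOn f a b Λ c) ∧
    ∀ (f : ℝ → Y) (a b : ℝ), IsQuasigeodesicOn f a b Λ c → IsQuasirulerOn f a b τ

/-- A metric space is hyperbolic. -/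
def HypSpace (Y : Type*) [MetricSpace Y] : Prop :=
  IsHyperbolic (fun x y : Y => dist x y)

/-- `f` is a quasi-isometry between metric spaces. -/
def MetricQI {X Y : Type*} [MetricSpace X] [MetricSpace Y] (f : X → Y) : Prop :=
  ∃ Λ c C : ℝ, 1 ≤ Λ ∧ 0 ≤ c ∧ 0 ≤ C ∧
    QIEmbed (fun a b : X => dist a b) (fun a b : Y => dist a b) f Λ c ∧
    ∀ y : Y, ∃ x : X, dist (f x) y ≤ C


/-! ### Part 1: geometry -/

section geometry
variable {X : Type*} {d : X → X → ℝ}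

lemma four_pt {δ : ℝ} (h : IsHyperbolicWith d δ) (hs : ∀ x y, d x y = d y x) (w x y z : X) :
    d x w + d y z ≤ max (d y w + d x z) (d z w + d x y) + 2 * δ := by
  have := h w x y z
  unfold gromov at this
  rcases min_choice ((d x w + d y w - d x y) / 2) ((d x w + d z w - d x z) / 2) with h1 | h1 <;>
    rw [h1] at this
  · have := le_max_right (d y w + d x z) (d z w + d x y); linarith
  · have := le_max_left (d y w + d x z) (d z w + d x y); linarith

/-- virtual distance to the point at height `t` between `a` and `b`. -/
def vd (d : X → X → ℝ) (a b : X) (t : ℝ) (y : X) : ℝ :=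
  max (d y a - t) (d y b - (d a b - t))

lemma vd_four {δ : ℝ} (h : IsHyperbolicWith d δ) (hs : ∀ x y, d x y = d y x) (a b : X) (t : ℝ)
    (x y z : X) :
    vd d a b t x + d y z ≤
      max (vd d a b t y + d x z) (vd d a b t z + d x y) + 2 * δ := by
  have h1 := four_pt h hs a x y z
  have h2 := four_pt h hs b x y z
  unfold vd
  rcases max_choice (d x a - t) (d x b - (d a b - t)) with e | e <;> rw [e]
  · have m1 := le_max_left (d y a - t) (d y b - (d a b - t))
    have m2 := le_max_left (d z a - t) (d z b - (d a b - t))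
    rcases le_max_iff.1 (le_refl (max (d y a + d x z) (d z a + d x y))) with e' | e'
    · have := le_max_left (max (d y a - t) (d y b - (d a b - t)) + d x z) (max (d z a - t) (d z b - (d a b - t)) + d x y)
      linarith
    · have := le_max_right (max (d y a - t) (d y b - (d a b - t)) + d x z) (max (d z a - t) (d z b - (d a b - t)) + d x y)
      linarith
  · have m1 := le_max_right (d y a - t) (d y b - (d a b - t))
    have m2 := le_max_right (d z a - t) (d z b - (d a b - t))
    rcases le_max_iff.1 (le_refl (max (d y b + d x z) (d z b + d x y))) with e' | e'
    · have := le_max_left (max (d y a - t) (d y b - (d a b - t)) + d x z) (max (d z a - t) (d z b - (d a b - t)) + d x y)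
      linarith
    · have := le_max_right (max (d y a - t) (d y b - (d a b - t)) + d x z) (max (d z a - t) (d z b - (d a b - t)) + d x y)
      linarith

lemma dyadic {δ L M : ℝ} (hδ : 0 ≤ δ) (hL : 0 ≤ L) (hd : IsMetricFun d) (D : X → ℝ)
    (hD : ∀ x y z, D x + d y z ≤ max (D y + d x z) (D z + d x y) + 2 * δ)
    (p : ℕ → X) (k : ℕ) : ∀ i j : ℕ, i ≤ j → j ≤ i + 2 ^ k →
      (∀ m, i ≤ m → m ≤ j → M ≤ D (p m)) → (∀ m, i ≤ m → m < j → d (p m) (p (m+1)) ≤ L) →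
      M - L - k * δ ≤ (D (p i) + D (p j) - d (p i) (p j)) / 2 := by
  induction k with
  | zero =>
    intro i j hij hj h1 h2
    have a1 := h1 i le_rfl hij
    have a2 := h1 j hij le_rfl
    rcases Nat.eq_or_lt_of_le hij with e | e
    · subst e; rw [hd.refl]; simp; linarith
    · have : j = i + 1 := by simp at hj; omega
      subst this
      have := h2 i le_rfl e
      simp; linarith
  | succ k ih =>
    intro i j hij hj h1 h2
    obtain ⟨m, him, hmj, hm1, hm2⟩ : ∃ m, i ≤ m ∧ m ≤ j ∧ m ≤ i + 2 ^ k ∧ j ≤ m + 2 ^ k := by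
      refine ⟨min (i + 2^k) j, by simp [hij], by simp, by simp, ?_⟩
      rw [pow_succ] at hj
      omega
    have a1 := ih i m him hm1 (fun q x y => h1 q x (y.trans hmj)) (fun q x y => h2 q x (y.trans_le hmj))
    have a2 := ih m j hmj hm2 (fun q x y => h1 q (him.trans x) y) (fun q x y => h2 q (him.trans x) y)
    have := hD (p m) (p i) (p j)
    push_cast
    rw [hd.symm (p m) (p i)] at this
    rcases le_max_iff.1 (le_refl (max (D (p i) + d (p m) (p j)) (D (p j) + d (p i) (p m)))) with e' | e'
    · linarith
    · linarith

lemma bound_M (a δ α β : ℝ) (hδ : 0 ≤ δ) (hα : 0 ≤ α) :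
    ∃ M0 : ℝ, ∀ (M : ℝ) (k : ℕ), M ≤ a + k * δ → (2:ℝ) ^ k ≤ α * M + β → M ≤ M0 := by
  have h1 : Tendsto (fun k : ℕ => (α * a + β) * ((1:ℝ)/ 2 ^ k) + (α * δ) * ((k:ℝ) ^ 1 / 2 ^ k)) atTop (𝓝 ((α * a + β) * 0 + (α * δ) * 0)) := by
    apply Tendsto.add
    · apply Tendsto.const_mul
      have := tendsto_pow_const_div_const_pow_of_one_lt 0 (r := (2:ℝ)) (by norm_num)
      simpa using this
    · apply Tendsto.const_mul
      exact tendsto_pow_const_div_const_pow_of_one_lt 1 (r := (2:ℝ)) (by norm_num)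
  have h2 := h1.eventually_lt_const (u := (1:ℝ)) (by norm_num)
  obtain ⟨k0, hk0⟩ := eventually_atTop.1 h2
  refine ⟨a + k0 * δ, fun M k hM hk => ?_⟩
  by_contra hcon
  push Not at hcon
  have hkk : k0 ≤ k := by
    by_contra hlt
    push Not at hlt
    have : (k:ℝ) ≤ k0 := by exact_mod_cast hlt.le
    nlinarith
  have h3 := hk0 k hkk
  have hp : (0:ℝ) < 2 ^ k := by positivity
  have h4 : (α * a + β) * ((1:ℝ)/ 2 ^ k) + (α * δ) * ((k:ℝ) ^ 1 / 2 ^ k) = (α * a + β + α * δ * k) / 2 ^ k := by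
    field_simp
  rw [h4, div_lt_one hp] at h3
  nlinarith

/-- Chains: uniformly quasigeodesic discrete paths. -/
def HasChains (d : X → X → ℝ) (L Λ c : ℝ) : Prop :=
  ∀ x y, ∃ (n : ℕ) (p : ℕ → X), p 0 = x ∧ p n = y ∧
    (∀ i, i < n → d (p i) (p (i+1)) ≤ L) ∧
    ∀ i j, i ≤ j → j ≤ n → ((j:ℝ) - i) ≤ Λ * d (p i) (p j) + c

lemma interpolation {δ L Λ c : ℝ} (hδ : 0 ≤ δ) (hL : 0 ≤ L) (hΛ : 0 ≤ Λ) (hd : IsMetricFun d)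
    (hh : IsHyperbolicWith d δ) (hc : HasChains d L Λ c) :
    ∃ c0 : ℝ, 0 ≤ c0 ∧ ∀ a b : X, ∀ t, 0 ≤ t → t ≤ d a b → ∃ x, vd d a b t x ≤ c0 := by
  obtain ⟨M0, hM0⟩ := bound_M (L + δ) δ (Λ * 12) (2 * (Λ * (2 * δ) + c) + 2) hδ (by positivity)
  refine ⟨max M0 δ, le_max_of_le_right hδ, ?_⟩
  intro a b
  obtain ⟨n, p, hp0, hpn, hstep, hqg⟩ := hc a b
  have hne : (Finset.range (n+1)).Nonempty := ⟨0, by simp⟩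
  let f : ℝ → ℝ := fun t => (Finset.range (n+1)).inf' hne (fun i => vd d a b t (p i))
  have hf : Continuous f := by
    apply Continuous.finset_inf'_apply
    intro i _
    unfold vd
    fun_prop
  have hs0 : 0 ≤ d a b := by
    have h1 := hd.triangle a b a
    rw [hd.refl, hd.symm b a] at h1
    linarith
  obtain ⟨t, ht, hmax⟩ := isCompact_Icc.exists_isMaxOn (s := Icc 0 (d a b)) ⟨0, by simp [hs0]⟩ hf.continuousOn
  have hex : ∀ t', ∃ i ≤ n, vd d a b t' (p i) = f t' := by
    intro t'
    obtain ⟨i, hi, e⟩ := Finset.exists_mem_eq_inf' hne (fun i => vd d a b t' (p i))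
    exact ⟨i, by simpa [Nat.lt_succ_iff] using hi, e.symm⟩
  have hle : ∀ t', ∀ i ≤ n, f t' ≤ vd d a b t' (p i) := by
    intro t' i hi
    exact Finset.inf'_le (fun i => vd d a b t' (p i)) (by simpa [Nat.lt_succ_iff] using hi)
  suffices hfin : f t ≤ max M0 δ by
    intro t' h1 h2
    obtain ⟨i, _, e⟩ := hex t'
    exact ⟨p i, by rw [e]; exact (hmax ⟨h1, h2⟩ : f t' ≤ f t).trans hfin⟩
  set M := f t with hM
  by_cases hMδ : M ≤ δ
  · exact le_max_of_le_right hMδ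
  push Not at hMδ
  obtain ⟨ht0, hts⟩ := ht
  set s := d a b with hs
  -- M ≤ t and M ≤ s - t
  have hMt : M ≤ t := by
    have := hle t 0 (Nat.zero_le _)
    rw [hp0] at this
    refine this.trans ?_
    unfold vd
    rw [hd.refl]
    apply max_le <;> linarith
  have hMst : M ≤ s - t := by
    have := hle t n le_rfl
    rw [hpn] at this
    refine this.trans ?_
    unfold vd
    rw [hd.refl, hd.symm b a]
    apply max_le <;> linarith
  obtain ⟨i, hi, hia, hib⟩ : ∃ i ≤ n, d (p i) a ≤ t - M ∧ d (p i) b ≤ s - t + 3 * M := by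
    by_cases h2 : 2 * M ≤ t
    · obtain ⟨i, hi, e⟩ := hex (t - 2 * M)
      have h3 : f (t - 2 * M) ≤ M := hmax ⟨by linarith, by linarith⟩
      rw [← e] at h3
      unfold vd at h3
      have := max_le_iff.1 h3
      exact ⟨i, hi, by linarith, by linarith⟩
    · refine ⟨0, Nat.zero_le _, ?_, ?_⟩
      · rw [hp0, hd.refl]; linarith
      · rw [hp0]; linarith
  obtain ⟨j, hj, hja, hjb⟩ : ∃ i ≤ n, d (p i) a ≤ t + 3 * M ∧ d (p i) b ≤ s - t - M := by
    by_cases h2 : 2 * M ≤ s - t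
    · obtain ⟨i, hi, e⟩ := hex (t + 2 * M)
      have h3 : f (t + 2 * M) ≤ M := hmax ⟨by linarith, by linarith⟩
      rw [← e] at h3
      unfold vd at h3
      have := max_le_iff.1 h3
      exact ⟨i, hi, by linarith, by linarith⟩
    · refine ⟨n, le_rfl, ?_, ?_⟩
      · rw [hpn, hd.symm]; linarith
      · rw [hpn, hd.refl]; linarith
  -- distance
  have hdist : d (p i) (p j) ≤ 6 * M + 2 * δ := by
    have := four_pt hh hd.symm (p j) (p i) a b
    rw [hd.symm a (p j), hd.symm b (p j)] at this
    rcases le_max_iff.1 (le_refl (max (d (p j) a + d (p i) b) (d (p j) b + d (p i) a))) with e' | e' <;> linarith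
  -- gromov product small
  have hg : vd d a b t (p i) + vd d a b t (p j) - d (p i) (p j) ≤ 2 * δ := by
    have v1 := hle t i hi
    have v2 := hle t j hj
    have e1 : vd d a b t (p i) = d (p i) b - (s - t) := by
      unfold vd at v1 ⊢
      rcases max_choice (d (p i) a - t) (d (p i) b - (d a b - t)) with e | e
      · rw [e] at v1; linarith
      · exact e
    have e2 : vd d a b t (p j) = d (p j) a - t := by
      unfold vd at v2 ⊢
      rcases max_choice (d (p j) a - t) (d (p j) b - (d a b - t)) with e | e
      · exact e
      · rw [e] at v2; linarith
    rw [e1, e2]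
    have := four_pt hh hd.symm b (p i) a (p j)
    rw [hd.symm a (p j)] at this
    have tr1 := hd.triangle a (p i) b
    have tr2 := hd.triangle a (p j) b
    rw [hd.symm a (p i)] at tr1
    rw [hd.symm a (p j)] at tr2
    rcases le_max_iff.1 (le_refl (max (d a b + d (p i) (p j)) (d (p j) b + d (p i) a))) with e' | e' <;> linarith
  have key : ∀ i j, i ≤ j → j ≤ n → vd d a b t (p i) + vd d a b t (p j) - d (p i) (p j) ≤ 2 * δ →
      d (p i) (p j) ≤ 6 * M + 2 * δ → M ≤ M0 := by
    intro i j hij hj hg hdist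
    have q := hqg i j hij hj
    have hMpos : 0 ≤ M := by linarith
    obtain ⟨k, hk1, hk2⟩ : ∃ k : ℕ, j ≤ i + 2 ^ k ∧ (2:ℝ) ^ k ≤ 2 * ((j:ℝ) - i) + 2 := by
      rcases Nat.eq_or_lt_of_le hij with e | e
      · exact ⟨0, by omega, by subst e; simp⟩
      · have hlt : 0 < j - i := by omega
        refine ⟨Nat.log 2 (j - i) + 1, ?_, ?_⟩
        · have := Nat.lt_pow_succ_log_self (b := 2) (by norm_num) (j - i)
          rw [Nat.succ_eq_add_one] at this
          omega
        · have := Nat.pow_log_le_self 2 (x := j - i) (by omega)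
          have h3 : ((2 ^ Nat.log 2 (j-i) : ℕ) : ℝ) ≤ ((j - i : ℕ) : ℝ) := by exact_mod_cast this
          rw [Nat.cast_sub hij] at h3
          push_cast at h3
          rw [pow_succ]; linarith
    have dy := dyadic (M := M) hδ hL hd (vd d a b t) (vd_four hh hd.symm a b t) p k i j hij hk1
      (fun m _ h2 => hle t m (h2.trans hj)) (fun m _ h2 => hstep m (h2.trans_le hj))
    refine hM0 M k (by linarith) ?_
    have : Λ * d (p i) (p j) ≤ Λ * (6 * M + 2 * δ) := mul_le_mul_of_nonneg_left hdist hΛ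
    linarith
  apply le_max_of_le_left
  rcases le_total i j with e | e
  · exact key i j e hj hg hdist
  · refine key j i e hi ?_ ?_
    · rw [hd.symm]; linarith
    · rw [hd.symm]; linarith

end geometry

section wordm
variable {G : Type*} [Group G]

lemma word_exists {S : Finset G} (hS : Generates S) (g : G) :
    ∃ l : List G, l.length = wordLength S g ∧ (∀ a ∈ l, a ∈ S ∨ a⁻¹ ∈ S) ∧ l.prod = g := by
  have hne : {n : ℕ | ∃ l : List G, l.length = n ∧ (∀ a ∈ l, a ∈ S ∨ a⁻¹ ∈ S) ∧ l.prod = g}.Nonempty := by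
    have : g ∈ Subgroup.closure (S : Set G) := by rw [hS]; trivial
    rw [← Subgroup.mem_toSubmonoid, Subgroup.closure_toSubmonoid] at this
    obtain ⟨l, h1, h2⟩ := Submonoid.exists_list_of_mem_closure this
    exact ⟨l.length, l, rfl, by simpa using h1, h2⟩
  exact Nat.sInf_mem hne

lemma word_le {S : Finset G} (l : List G) (h : ∀ a ∈ l, a ∈ S ∨ a⁻¹ ∈ S) :
    wordLength S l.prod ≤ l.length :=
  Nat.sInf_le ⟨l, rfl, h, rfl⟩

lemma word_mul {S : Finset G} (hS : Generates S) (g h : G) :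
    wordLength S (g * h) ≤ wordLength S g + wordLength S h := by
  obtain ⟨l, a1, a2, a3⟩ := word_exists hS g
  obtain ⟨k, b1, b2, b3⟩ := word_exists hS h
  have := word_le (S := S) (l ++ k) (by
    intro a ha; rcases List.mem_append.1 ha with h | h; exacts [a2 a h, b2 a h])
  simpa [a3, b3, a1, b1] using this

lemma word_inv_le {S : Finset G} (hS : Generates S) (g : G) :
    wordLength S g⁻¹ ≤ wordLength S g := by
  obtain ⟨l, a1, a2, a3⟩ := word_exists hS g
  have := word_le (S := S) (l.map (·⁻¹)).reverse (by
    intro a ha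
    simp only [List.mem_reverse, List.mem_map] at ha
    obtain ⟨b, hb, rfl⟩ := ha
    have := a2 b hb
    simpa [or_comm] using this)
  rw [← List.prod_inv_reverse, a3] at this
  simpa [a1] using this

lemma wd_tri {S : Finset G} (hS : Generates S) (x y z : G) :
    wordDist S x z ≤ wordDist S x y + wordDist S y z := by
  unfold wordDist
  have := word_mul hS (x⁻¹ * y) (y⁻¹ * z)
  have e : x⁻¹ * y * (y⁻¹ * z) = x⁻¹ * z := by group
  rw [e] at this
  exact_mod_cast this

lemma wd_symm {S : Finset G} (hS : Generates S) (x y : G) :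
    wordDist S x y = wordDist S y x := by
  unfold wordDist
  have h1 := word_inv_le hS (x⁻¹ * y)
  have h2 := word_inv_le hS (y⁻¹ * x)
  simp only [mul_inv_rev, inv_inv] at h1 h2
  exact_mod_cast le_antisymm h2 h1

lemma wd_self {S : Finset G} (x : G) : wordDist S x x = 0 := by
  unfold wordDist
  have := word_le (S := S) ([] : List G) (by simp)
  simp at this
  simpa using this

lemma chains_of_qi {d : G → G → ℝ} {S : Finset G} (hS : Generates S)
    (hq : QuasiIsometric d (wordDist S)) (hd : IsMetricFun d) :
    ∃ L Λ c : ℝ, 0 ≤ L ∧ 0 ≤ Λ ∧ HasChains d L Λ c := by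
  obtain ⟨f, Λ, c, C, hΛ, hc, hC, hf, hsurj⟩ := hq
  have hΛ0 : 0 < Λ := by linarith
  refine ⟨Λ * (2 * C + 1 + c), Λ, 2 * C + c + 1, by positivity, hΛ0.le, ?_⟩
  intro x y
  obtain ⟨l, h1, h2, h3⟩ := word_exists hS ((f x)⁻¹ * f y)
  set n := l.length with hn
  let q : ℕ → G := fun i => f x * (l.take i).prod
  have hq0 : q 0 = f x := by simp [q]
  have hqn : q n = f y := by simp [q, hn, h3]
  have hqij : ∀ i j, i ≤ j → j ≤ n → (wordDist S (q i) (q j) : ℝ) ≤ (j:ℝ) - i := by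
    intro i j hij hj
    have e : (q i)⁻¹ * q j = ((l.take j).drop i).prod := by
      have : (l.take j).prod = (l.take i).prod * ((l.take j).drop i).prod := by
        rw [← List.prod_take_mul_prod_drop (l.take j) i, List.take_take, min_eq_left hij]
      simp only [q]
      rw [this]; group
    unfold wordDist
    rw [e]
    have := word_le (S := S) ((l.take j).drop i) (fun a ha => h2 a (List.mem_of_mem_take (List.mem_of_mem_drop ha)))
    have h5 : ((l.take j).drop i).length = j - i := by simp; omega
    rw [h5] at this
    rw [← Nat.cast_sub hij]
    exact_mod_cast this
  have hxy : wordDist S (f x) (f y) = n := by unfold wordDist; rw [← h1]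
  have hqge : ∀ i j, i ≤ j → j ≤ n → ((j:ℝ) - i) ≤ wordDist S (q i) (q j) := by
    intro i j hij hj
    have t1 := wd_tri hS (f x) (q i) (f y)
    have t2 := wd_tri hS (q i) (q j) (f y)
    have a1 := hqij 0 i (Nat.zero_le _) (hij.trans hj)
    have a2 := hqij j n hj le_rfl
    rw [hq0] at a1
    rw [hqn] at a2
    push_cast at a1
    linarith
  choose g hg using hsurj
  let p : ℕ → G := fun i => if i = 0 then x else if i = n then y else g (q i)
  by_cases hn0 : n = 0
  · -- trivial: f x = f y, use a one step chain
    have hfxy : wordDist S (f x) (f y) = 0 := by rw [hxy, hn0]; simp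
    refine ⟨1, fun i => if i = 0 then x else y, by simp, by simp, ?_, ?_⟩
    · intro i hi
      have : i = 0 := by omega
      subst this
      simp
      have := (hf x y).1
      rw [hfxy] at this
      have h6 : d x y / Λ ≤ c := by linarith
      rw [div_le_iff₀ hΛ0] at h6
      nlinarith
    · intro i j hij hj
      have hd0 : 0 ≤ d (if i = 0 then x else y) (if j = 0 then x else y) := by
        have tt := hd.triangle (if i = 0 then x else y) (if j = 0 then x else y) (if i = 0 then x else y)
        rw [hd.refl, hd.symm (if j = 0 then x else y)] at tt
        linarith
      have hj' : (j:ℝ) ≤ 1 := by exact_mod_cast hj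
      have hi' : (0:ℝ) ≤ i := by positivity
      have := mul_nonneg hΛ0.le hd0
      linarith
  have hp : ∀ i ≤ n, wordDist S (f (p i)) (q i) ≤ C := by
    intro i hi
    simp only [p]
    split_ifs with e1 e2
    · rw [e1, hq0, wd_self]; exact hC
    · rw [e2, hqn, wd_self]; exact hC
    · exact hg _
  refine ⟨n, p, by simp [p], by simp [p, hn0], ?_, ?_⟩
  · intro i hi
    have a1 := hp i hi.le
    have a2 := hp (i+1) hi
    have a3 := hqij i (i+1) (by omega) hi
    push_cast at a3
    have t1 := wd_tri hS (f (p i)) (q i) (f (p (i+1)))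
    have t2 := wd_tri hS (q i) (q (i+1)) (f (p (i+1)))
    rw [wd_symm hS (q (i+1))] at t2
    have := (hf (p i) (p (i+1))).1
    have h6 : d (p i) (p (i+1)) / Λ ≤ 2 * C + 1 + c := by linarith
    rw [div_le_iff₀ hΛ0] at h6
    linarith
  · intro i j hij hj
    have a1 := hp i (hij.trans hj)
    have a2 := hp j hj
    have a3 := hqge i j hij hj
    have t1 := wd_tri hS (q i) (f (p i)) (q j)
    have t2 := wd_tri hS (f (p i)) (f (p j)) (q j)
    rw [wd_symm hS (q i) (f (p i))] at t1
    have := (hf (p i) (p j)).2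
    linarith

end wordm

/-! ### Part 2: probability -/
section prob
variable {G : Type*} [Group G]

/-- cylinder of a finite list of increments -/
def cyl (l : List G) : Set (ℕ → G) := {ω | (List.range l.length).map ω = l}

/-- shift on increments -/
def shf (n : ℕ) (ω : ℕ → G) : ℕ → G := fun k => ω (n + k)

lemma walkPos_add (n m : ℕ) (ω : ℕ → G) :
    walkPos (n + m) ω = walkPos n ω * walkPos m (shf n ω) := by
  unfold walkPos shf
  rw [List.range_add, List.map_append, List.prod_append, List.map_map]
  rfl

lemma walkPos_zero (ω : ℕ → G) : walkPos 0 ω = 1 := by simp [walkPos]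

lemma mem_cyl_iff (l : List G) (ω : ℕ → G) :
    ω ∈ cyl l ↔ ∀ i : Fin l.length, ω (i : ℕ) = l.get i := by
  unfold cyl
  simp only [mem_ofPred_eq]
  constructor
  · intro h i
    have : (l.get i) = ((List.range l.length).map ω)[(i:ℕ)]'(by simp) := by
      simp only [List.get_eq_getElem]
      congr 1
      exact h.symm
    rw [this]; simp
  · intro h
    apply List.ext_getElem (by simp)
    intro n h1 h2
    simpa using h ⟨n, h2⟩

lemma cyl_append (l l' : List G) : cyl l ∩ shf l.length ⁻¹' cyl l' = cyl (l ++ l') := by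
  ext ω
  simp only [cyl, mem_inter_iff, mem_ofPred_eq, mem_preimage, List.length_append, List.range_add,
    List.map_append, List.map_map]
  have : (ω ∘ fun x => l.length + x) = shf l.length ω := rfl
  rw [this]
  constructor
  · rintro ⟨h1, h2⟩; rw [h1, h2]
  · intro h; exact List.append_inj h (by simp)

lemma cyl_inter {l l' : List G} (h : l.length ≤ l'.length) (hne : (cyl l ∩ cyl l').Nonempty) :
    cyl l ∩ cyl l' = cyl l' := by
  obtain ⟨ω, h1, h2⟩ := hne
  apply inter_eq_right.2
  intro η hη
  rw [mem_cyl_iff] at *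
  intro i
  have a := h1 i
  have b := h2 ⟨i, i.2.trans_le h⟩
  have c := hη ⟨i, i.2.trans_le h⟩
  simp only at b c
  rw [c, ← b, a]

variable [Countable G] [MeasurableSpace G] [MeasurableSingletonClass G]

lemma measurableSet_cyl (l : List G) : MeasurableSet (cyl l) := by
  have : cyl l = ⋂ i : Fin l.length, (fun ω : ℕ → G => ω i) ⁻¹' {l.get i} := by
    ext ω; rw [mem_cyl_iff]; simp
  rw [this]
  exact MeasurableSet.iInter fun i => measurable_pi_apply _ (measurableSet_singleton _)

lemma measurable_shf (n : ℕ) : Measurable (shf n : (ℕ → G) → ℕ → G) :=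
  measurable_pi_lambda _ fun k => measurable_pi_apply _

lemma measurable_walkPos (n : ℕ) : Measurable (walkPos n : (ℕ → G) → G) := by
  induction n with
  | zero => simp only [funext walkPos_zero]; exact measurable_const
  | succ n ih =>
    have : (walkPos (n+1) : (ℕ → G) → G) = fun ω => (fun p : G × G => p.1 * p.2) (walkPos n ω, ω n) := by
      funext ω
      rw [walkPos_add]; simp [walkPos, shf]
    rw [this]
    exact (Measurable.of_discrete (f := fun p : G × G => p.1 * p.2)).comp (ih.prodMk (measurable_pi_apply n))

lemma gen_cyl : (MeasurableSpace.pi : MeasurableSpace (ℕ → G)) =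
    MeasurableSpace.generateFrom {s | ∃ l : List G, s = cyl l} := by
  apply le_antisymm
  · refine iSup_le fun i => ?_
    rintro _ ⟨s, hs, rfl⟩
    have : (fun ω : ℕ → G => ω i) ⁻¹' s =
        ⋃ l ∈ {l : List G | l.length = i + 1 ∧ ∃ a ∈ s, l[i]? = some a}, cyl l := by
      ext ω
      simp only [mem_preimage, mem_iUnion, mem_ofPred_eq, exists_prop]
      constructor
      · intro h
        exact ⟨(List.range (i+1)).map ω, ⟨by simp, ω i, h, by simp⟩, by simp [cyl]⟩
      · rintro ⟨l, ⟨h1, a, ha, h2⟩, h3⟩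
        rw [mem_cyl_iff] at h3
        have := h3 ⟨i, by omega⟩
        simp only [List.get_eq_getElem] at this
        rw [List.getElem?_eq_getElem (by omega)] at h2
        rw [this, Option.some.inj h2]; exact ha
    rw [this]
    exact MeasurableSet.biUnion (to_countable _) fun l _ => MeasurableSpace.measurableSet_generateFrom ⟨l, rfl⟩
  · apply MeasurableSpace.generateFrom_le
    rintro _ ⟨l, rfl⟩
    exact measurableSet_cyl l

variable {μ : G → ℝ} {P : Measure (ℕ → G)}

lemma P_cyl (hP : IsWalkMeasure μ P) (hμ : ∀ g, 0 ≤ μ g) (l : List G) :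
    P (cyl l) = ENNReal.ofReal (l.map μ).prod := by
  have : cyl l = {ω : ℕ → G | ∀ i : Fin l.length, ω (i : ℕ) = l.get i} := by
    ext ω; exact mem_cyl_iff l ω
  rw [this, hP.2 l.length l.get, ← ENNReal.ofReal_prod_of_nonneg (fun i _ => hμ _)]
  congr 1
  rw [← List.prod_ofFn]
  congr 1
  apply List.ext_getElem (by simp)
  intro n h1 h2
  simp

lemma markov (hP : IsWalkMeasure μ P) (hμ : ∀ g, 0 ≤ μ g) (l : List G) {E : Set (ℕ → G)}
    (hE : MeasurableSet E) :
    P (cyl l ∩ shf l.length ⁻¹' E) = P (cyl l) * P E := by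
  have := hP.1
  have key : (P.restrict (cyl l)).map (shf l.length) = P (cyl l) • P := by
    have hfin : IsFiniteMeasure ((P.restrict (cyl l)).map (shf l.length)) := by
      exact Measure.isFiniteMeasure_map _ _
    refine ext_of_generate_finite _ gen_cyl ?_ ?_ ?_
    · rintro _ ⟨l, rfl⟩ _ ⟨l', rfl⟩ hne
      rcases le_total l.length l'.length with h | h
      · exact ⟨l', cyl_inter h hne⟩
      · rw [inter_comm] at hne ⊢
        exact ⟨l, cyl_inter h hne⟩
    · rintro _ ⟨l', rfl⟩
      rw [Measure.map_apply (measurable_shf _) (measurableSet_cyl _),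
        Measure.restrict_apply (measurable_shf _ (measurableSet_cyl _)), inter_comm, cyl_append]
      simp only [Measure.smul_apply, smul_eq_mul]
      rw [P_cyl hP hμ, P_cyl hP hμ, P_cyl hP hμ, List.map_append, List.prod_append,
        ENNReal.ofReal_mul]
      apply List.prod_nonneg
      intro a ha
      obtain ⟨b, _, rfl⟩ := List.mem_map.1 ha
      exact hμ b
    · rw [Measure.map_apply (measurable_shf _) MeasurableSet.univ]
      simp
  have h2 := congrArg (fun m => m E) key
  simp only [Measure.smul_apply, smul_eq_mul] at h2
  rw [Measure.map_apply (measurable_shf _) hE, Measure.restrict_apply (measurable_shf _ hE),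
    inter_comm] at h2
  exact h2

lemma walkPositions_eq (l : List G) : ∀ x : G,
    walkPositions x l = (List.range (l.length+1)).map (fun k => x * (l.take k).prod) := by
  induction l with
  | nil => intro x; simp [walkPositions]
  | cons a l ih =>
    intro x
    have h : walkPositions x (a :: l) = x :: walkPositions (x * a) l := by
      simp [walkPositions]
    rw [h, ih, List.length_cons, List.range_succ_eq_map (n := l.length + 1)]
    simp [List.map_map, Function.comp_def, mul_assoc]

lemma firstHit_iff (x y : G) (l : List G) :
    IsFirstHitPath x y l ↔ x * l.prod = y ∧ ∀ k < l.length, x * (l.take k).prod ≠ y := by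
  unfold IsFirstHitPath
  rw [walkPositions_eq, List.range_succ, List.map_append]
  simp

lemma cyl_walkPos {l : List G} {ω : ℕ → G} (h : ω ∈ cyl l) {k : ℕ} (hk : k ≤ l.length) :
    walkPos k ω = (l.take k).prod := by
  unfold walkPos
  have h' : (List.range l.length).map ω = l := h
  have : (List.range k).map ω = l.take k := by
    conv_rhs => rw [← h']
    rw [← List.map_take, List.take_range, min_eq_left hk]
  rw [this]

/-- hitting event -/
def hit (x y : G) : Set (ℕ → G) := {ω | ∃ n, x * walkPos n ω = y}

lemma exists_firstHit {x y : G} {ω : ℕ → G} {n : ℕ} (h : x * walkPos n ω = y) :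
    ∃ l : List G, IsFirstHitPath x y l ∧ ω ∈ cyl l ∧ l.length ≤ n := by
  classical
  have hex : ∃ n, x * walkPos n ω = y := ⟨n, h⟩
  refine ⟨(List.range (Nat.find hex)).map ω, ?_, by simp [cyl], by simpa using Nat.find_min' hex h⟩
  have hc : ω ∈ cyl ((List.range (Nat.find hex)).map ω) := by simp [cyl]
  rw [firstHit_iff]
  refine ⟨Nat.find_spec hex, fun k hk => ?_⟩
  rw [← cyl_walkPos hc hk.le]
  exact Nat.find_min hex (by simpa using hk)

lemma firstHit_walkPos {x y : G} {l : List G} (hl : IsFirstHitPath x y l) {ω : ℕ → G}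
    (h : ω ∈ cyl l) : x * walkPos l.length ω = y := by
  rw [cyl_walkPos h le_rfl, List.take_length]
  exact ((firstHit_iff x y l).1 hl).1

lemma hit_eq (x y : G) : hit x y = ⋃ l : {l : List G // IsFirstHitPath x y l}, cyl (l : List G) := by
  ext ω
  simp only [hit, mem_ofPred_eq, mem_iUnion]
  constructor
  · rintro ⟨n, hn⟩
    obtain ⟨l, h1, h2, _⟩ := exists_firstHit hn
    exact ⟨⟨l, h1⟩, h2⟩
  · rintro ⟨⟨l, hl⟩, h⟩
    exact ⟨l.length, firstHit_walkPos hl h⟩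

lemma firstHit_disj (x y : G) : Pairwise (Function.onFun Disjoint
    fun l : {l : List G // IsFirstHitPath x y l} => cyl (l : List G)) := by
  rintro ⟨l, hl⟩ ⟨l', hl'⟩ hne
  rw [Function.onFun, Set.disjoint_left]
  intro ω h h'
  apply hne
  have e : l.length = l'.length := by
    have a := (firstHit_iff x y l).1 hl
    have a' := (firstHit_iff x y l').1 hl'
    rcases lt_trichotomy l.length l'.length with c | c | c
    · exact absurd (firstHit_walkPos hl h) (by rw [cyl_walkPos h' c.le]; exact a'.2 _ c)
    · exact c
    · exact absurd (firstHit_walkPos hl' h') (by rw [cyl_walkPos h c.le]; exact a.2 _ c)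
  have e1 : (List.range l.length).map ω = l := h
  have e2 : (List.range l'.length).map ω = l' := h'
  simp only [Subtype.mk.injEq]
  rw [← e1, ← e2, e]

/-- after first hitting `y` from `x`, the future is in `E` -/
def hitThen (x y : G) (E : Set (ℕ → G)) : Set (ℕ → G) :=
  ⋃ l : {l : List G // IsFirstHitPath x y l}, (cyl (l : List G) ∩ shf (l : List G).length ⁻¹' E)

lemma P_hitThen (hP : IsWalkMeasure μ P) (hμ : ∀ g, 0 ≤ μ g) (x y : G) {E : Set (ℕ → G)}
    (hE : MeasurableSet E) : P (hitThen x y E) = P (hit x y) * P E := by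
  unfold hitThen
  rw [measure_iUnion, hit_eq, measure_iUnion (firstHit_disj x y) (fun l => measurableSet_cyl _),
    ← ENNReal.tsum_mul_right]
  · congr 1
    funext l
    exact markov hP hμ _ hE
  · intro l l' h
    exact (firstHit_disj x y h).mono inter_subset_left inter_subset_left
  · intro l
    exact (measurableSet_cyl _).inter (measurable_shf _ hE)

lemma P_hit (hP : IsWalkMeasure μ P) (hμ : ∀ g, 0 ≤ μ g) (x y : G) :
    P (hit x y) = ENNReal.ofReal (hitProb μ x y) := by
  have := hP.1
  have h1 : P (hit x y) = ∑' l : {l : List G // IsFirstHitPath x y l},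
      ENNReal.ofReal (((l : List G).map μ).prod) := by
    rw [hit_eq, measure_iUnion (firstHit_disj x y) (fun l => measurableSet_cyl _)]
    congr 1; funext l; exact P_cyl hP hμ _
  have hnn : ∀ l : {l : List G // IsFirstHitPath x y l}, 0 ≤ ((l : List G).map μ).prod := by
    intro l
    apply List.prod_nonneg
    intro a ha
    obtain ⟨b, _, rfl⟩ := List.mem_map.1 ha
    exact hμ b
  have hs : Summable fun l : {l : List G // IsFirstHitPath x y l} => ((l : List G).map μ).prod := by
    have := ENNReal.summable_toReal (h1 ▸ measure_ne_top P (hit x y))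
    refine this.congr fun l => ?_
    rw [ENNReal.toReal_ofReal (hnn l)]
  rw [h1, hitProb, ENNReal.ofReal_tsum_of_nonneg hnn hs]

/-- the green metric recovers the hitting probability -/
lemma P_hit_exp (hP : IsWalkMeasure μ P) (hμ : ∀ g, 0 ≤ μ g) (hd : IsMetricFun (greenDist μ))
    (x y : G) : P (hit x y) = ENNReal.ofReal (Real.exp (- greenDist μ x y)) := by
  have := hP.1
  have h0 : 0 ≤ hitProb μ x y := by
    apply tsum_nonneg
    intro l
    apply List.prod_nonneg
    intro a ha
    obtain ⟨b, _, rfl⟩ := List.mem_map.1 ha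
    exact hμ b
  have hne : hitProb μ x y ≠ 0 := by
    intro h
    by_cases hxy : x = y
    · subst hxy
      have h1 := P_hit hP hμ x x
      have : hit x x = univ := by
        ext ω; simp only [hit, mem_ofPred_eq, mem_univ, iff_true]
        exact ⟨0, by rw [walkPos_zero, mul_one]⟩
      rw [this, measure_univ, h] at h1
      simp at h1
    · have := hd.pos x y hxy
      rw [greenDist, h] at this
      simp at this
  rw [P_hit hP hμ, greenDist, neg_neg, Real.exp_log (lt_of_le_of_ne h0 hne.symm)]

/-- The last visit of `A` from `z` is at `y`. -/
def lastAt (A : Set G) (z y : G) : Set (ℕ → G) :=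
  {ω | ∃ n, z * walkPos n ω = y ∧ ∀ m, n < m → z * walkPos m ω ∉ A}

lemma measurableSet_walk (z : G) (n : ℕ) (A : Set G) : MeasurableSet {ω : ℕ → G | z * walkPos n ω ∈ A} := by
  have h : MeasurableSet {g : G | z * g ∈ A} := MeasurableSet.of_discrete
  exact measurable_walkPos n h

lemma measurableSet_lastAt (A : Set G) (z y : G) : MeasurableSet (lastAt A z y) := by
  have : lastAt A z y = ⋃ n, ({ω | z * walkPos n ω ∈ ({y} : Set G)} ∩
      ⋂ m, ⋂ (_ : n < m), {ω | z * walkPos m ω ∈ A}ᶜ) := by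
    ext ω; simp [lastAt]
  rw [this]
  exact MeasurableSet.iUnion fun n => (measurableSet_walk _ _ _).inter
    (MeasurableSet.iInter fun m => MeasurableSet.iInter fun _ => (measurableSet_walk _ _ _).compl)

lemma lastAt_eq (A : Set G) (z : G) {y : G} (hy : y ∈ A) :
    lastAt A z y = hitThen z y (lastAt A y y) := by
  ext ω
  simp only [hitThen, mem_iUnion, mem_inter_iff, mem_preimage]
  constructor
  · rintro ⟨n, hn, hm⟩
    obtain ⟨l, h1, h2, h3⟩ := exists_firstHit hn
    obtain ⟨k, rfl⟩ := Nat.exists_eq_add_of_le h3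
    have hl := firstHit_walkPos h1 h2
    refine ⟨⟨l, h1⟩, h2, k, ?_, ?_⟩
    · rw [walkPos_add, ← mul_assoc, hl] at hn; exact hn
    · intro m hkm
      have := hm (l.length + m) (by omega)
      rwa [walkPos_add, ← mul_assoc, hl] at this
  · rintro ⟨⟨l, h1⟩, h2, k, hk, hm⟩
    have hl := firstHit_walkPos h1 h2
    refine ⟨l.length + k, ?_, ?_⟩
    · rw [walkPos_add, ← mul_assoc, hl]; exact hk
    · intro m hkm
      obtain ⟨j, rfl⟩ := Nat.exists_eq_add_of_le (show l.length ≤ m by omega)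
      rw [walkPos_add, ← mul_assoc, hl]
      exact hm j (by omega)

lemma lastAt_disj (A : Set G) (z : G) {y y' : G} (hy : y ∈ A) (hy' : y' ∈ A) (hne : y ≠ y') :
    Disjoint (lastAt A z y) (lastAt A z y') := by
  rw [Set.disjoint_left]
  rintro ω ⟨n, h1, h2⟩ ⟨n', h1', h2'⟩
  rcases lt_trichotomy n n' with c | c | c
  · exact h2 n' c (h1' ▸ hy')
  · subst c; exact hne (h1.symm.trans h1')
  · exact h2' n c (h1 ▸ hy)

/-- main comparison for finite sets -/
lemma hit_finset (hP : IsWalkMeasure μ P) (hμ : ∀ g, 0 ≤ μ g)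
    (htr : ∀ A : Finset G, ∀ᵐ ω ∂P, ∃ N, ∀ m, N ≤ m → walkPos m ω ∉ A)
    (x : G) (K : ℝ≥0∞) (A : Finset G)
    (hA : ∀ y ∈ A, P (hit 1 y) ≤ K * P (hit x y)) :
    P {ω | ∃ n, walkPos n ω ∈ A} ≤ K := by
  have := hP.1
  have hle : ∀ z, ∑ y ∈ A, P (lastAt A z y) ≤ 1 := by
    intro z
    rw [← measure_biUnion_finset]
    · exact prob_le_one
    · intro y hy y' hy' hne
      exact lastAt_disj _ z hy hy' hne
    · intro y _; exact measurableSet_lastAt _ _ _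
  have h1 : P {ω | ∃ n, walkPos n ω ∈ A} ≤ P (⋃ y ∈ A, lastAt (A : Set G) 1 y) := by
    apply measure_mono_ae
    filter_upwards [htr A] with ω hω
    rintro ⟨n, hn⟩
    obtain ⟨N, hN⟩ := hω
    classical
    have hnN : n ≤ N := by
      by_contra hc
      exact hN n (by omega) hn
    have hspec := Nat.findGreatest_spec (P := fun k => walkPos k ω ∈ A) hnN hn
    change ω ∈ (⋃ y ∈ A, lastAt (A : Set G) 1 y)
    simp only [mem_iUnion]
    refine ⟨_, hspec, Nat.findGreatest (fun k => walkPos k ω ∈ A) N, by simp, ?_⟩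
    intro m hm
    rw [one_mul]
    by_cases hmN : m ≤ N
    · simpa using Nat.findGreatest_is_greatest hm hmN
    · simpa using hN m (by omega)
  calc P {ω | ∃ n, walkPos n ω ∈ A} ≤ _ := h1
    _ ≤ ∑ y ∈ A, P (lastAt (A : Set G) 1 y) := measure_biUnion_finset_le _ _
    _ = ∑ y ∈ A, P (hit 1 y) * P (lastAt (A : Set G) y y) := by
        refine Finset.sum_congr rfl fun y hy => ?_
        rw [lastAt_eq _ _ (by simpa using hy), P_hitThen hP hμ _ _ (measurableSet_lastAt _ _ _)]
    _ ≤ ∑ y ∈ A, K * (P (hit x y) * P (lastAt (A : Set G) y y)) := by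
        refine Finset.sum_le_sum fun y hy => ?_
        rw [← mul_assoc]
        gcongr
        exact hA y hy
    _ = K * ∑ y ∈ A, P (lastAt (A : Set G) x y) := by
        rw [Finset.mul_sum]
        refine Finset.sum_congr rfl fun y hy => ?_
        rw [lastAt_eq _ x (by simpa using hy), P_hitThen hP hμ _ _ (measurableSet_lastAt _ _ _)]
    _ ≤ K * 1 := by gcongr; exact hle x
    _ = K := mul_one _

lemma hit_set (hP : IsWalkMeasure μ P) (hμ : ∀ g, 0 ≤ μ g)
    (htr : ∀ A : Finset G, ∀ᵐ ω ∂P, ∃ N, ∀ m, N ≤ m → walkPos m ω ∉ A)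
    (x : G) (K : ℝ≥0∞) (H : Set G)
    (hA : ∀ y ∈ H, P (hit 1 y) ≤ K * P (hit x y)) :
    P {ω | ∃ n, walkPos n ω ∈ H} ≤ K := by
  classical
  have : {ω : ℕ → G | ∃ n, walkPos n ω ∈ H} =
      ⋃ A : Finset H, {ω | ∃ n, walkPos n ω ∈ A.map (Function.Embedding.subtype _)} := by
    ext ω
    simp only [mem_ofPred_eq, mem_iUnion]
    constructor
    · rintro ⟨n, hn⟩
      exact ⟨{⟨_, hn⟩}, n, by simp⟩
    · rintro ⟨A, n, hn⟩
      simp at hn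
      exact ⟨n, hn.1⟩
  rw [this, Directed.measure_iUnion]
  · refine iSup_le fun A => hit_finset hP hμ htr x K _ fun y hy => hA y ?_
    simp at hy
    exact hy.1
  · apply Monotone.directed_le
    intro A B hAB
    rintro ω ⟨n, hn⟩
    exact ⟨n, Finset.map_subset_map.2 hAB hn⟩

end prob

/-! ### Part 3: conclusion -/
section final
variable {G : Type*} [Group G] 

lemma mf_nonneg {X : Type*} {d : X → X → ℝ} (hd : IsMetricFun d) (x y : X) : 0 ≤ d x y := by
  have h1 := hd.triangle x y x
  rw [hd.refl, hd.symm y x] at h1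
  linarith

lemma gr_nonneg {X : Type*} {d : X → X → ℝ} (hd : IsMetricFun d) (w x y : X) : 0 ≤ gromov d w x y := by
  have := hd.triangle x w y
  rw [hd.symm w y] at this
  unfold gromov; linarith

lemma gr_symm {X : Type*} {d : X → X → ℝ} (hd : IsMetricFun d) (w x y : X) :
    gromov d w x y = gromov d w y x := by
  unfold gromov; rw [hd.symm x y]; ring

lemma gr_le {X : Type*} {d : X → X → ℝ} (hd : IsMetricFun d) (w x y : X) : gromov d w x y ≤ d w y := by
  have := hd.triangle x y w
  rw [hd.symm w y]
  unfold gromov; linarith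

lemma gr_min {X : Type*} {d : X → X → ℝ} {δ : ℝ} (h : IsHyperbolicWith d δ) (w x y z : X) {r : ℝ}
    (h1 : r ≤ gromov d w x y) (h2 : r ≤ gromov d w x z) : r - δ ≤ gromov d w y z := by
  have := h w x y z
  have := le_min h1 h2
  linarith

section bdry
variable {d : G → G → ℝ} {B : Type*} (bd : BoundaryData G d B)

lemma conv_escape (hd : IsMetricFun d) {u : ℕ → G} {b : B} (h : bd.conv u b) (A : Finset G) :
    ∃ N, ∀ m, N ≤ m → u m ∉ A := by
  have h1 := bd.conv_tendstoInfinity u b h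
  have h2 : Tendsto (fun n => d (u n) 1) atTop atTop := by
    have : Tendsto (fun n : ℕ => (n, n)) atTop atTop := by
      rw [← prod_atTop_atTop_eq]; exact tendsto_id.prodMk tendsto_id
    refine (h1.comp this).congr fun n => ?_
    simp only [Function.comp, gromov, hd.refl]; ring
  have h3 : ∀ᶠ m in atTop, ∀ a ∈ A, d a 1 < d (u m) 1 :=
    (Filter.eventually_all_finset A).2 fun a _ => h2.eventually_gt_atTop _
  obtain ⟨N, hN⟩ := eventually_atTop.1 h3
  exact ⟨N, fun m hm ha => lt_irrefl _ (hN m hm _ ha)⟩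

lemma conv_tail {u : ℕ → G} {b : B} (h : bd.conv u b) (T : ℝ) :
    ∃ N, ∀ m, N ≤ m → ∀ n, N ≤ n → T ≤ gromov d 1 (u m) (u n) := by
  have h1 := (bd.conv_tendstoInfinity u b h).eventually_ge_atTop T
  obtain ⟨⟨N, N'⟩, hN⟩ := eventually_atTop.1 h1
  exact ⟨max N N', fun m hm n hn => hN (m, n) ⟨(le_max_left _ _).trans hm, (le_max_right _ _).trans hn⟩⟩

end bdry

section visual
variable {d : G → G → ℝ} {B : Type*} [MetricSpace B] {bd : BoundaryData G d B} {ε C : ℝ}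

lemma visual_upper (hd : IsMetricFun d) (hv : IsVisualMetric d bd ε C) {u v : ℕ → G} {a b : B}
    (hu : bd.conv u a) (hw : bd.conv v b) {r : ℝ} (hr : dist b a < r) :
    ∀ᶠ n in atTop, -(Real.log (C * r)) / ε - 1 ≤ gromov d 1 (u n) (v n) := by
  obtain ⟨hε, hC, hv⟩ := hv
  by_cases hab : a = b
  · subst hab
    exact ((bd.conv_iff u v a hu).1 hw).eventually_ge_atTop _
  · have h1 := (hv u v a b hu hw hab).2
    have h0 : 0 < dist b a := dist_pos.2 (Ne.symm hab)
    rw [dist_comm] at h1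
    have h2 : Real.exp (-ε * seqGromov d u v) ≤ C * r := h1.trans (by gcongr)
    have h3 : -ε * seqGromov d u v ≤ Real.log (C * r) := by
      rw [Real.le_log_iff_exp_le (by nlinarith [mul_pos hC (h0.trans hr)])]; exact h2
    have h4 : -(Real.log (C * r)) / ε ≤ seqGromov d u v := by
      rw [div_le_iff₀ hε]; linarith
    have h5 : -(Real.log (C * r)) / ε - 1 < seqGromov d u v := by linarith
    have h6 := eventually_lt_of_lt_liminf h5
      (isBoundedUnder_of ⟨0, fun n => gr_nonneg hd _ _ _⟩)
    filter_upwards [h6] with n hn using hn.le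

lemma visual_lower (hv : IsVisualMetric d bd ε C) {u v : ℕ → G} {a b : B}
    (hu : bd.conv u a) (hw : bd.conv v b) {R : ℝ}
    (hR : ∀ᶠ n in atTop, R ≤ gromov d 1 (u n) (v n)) :
    dist a b ≤ C * Real.exp (-ε * R) := by
  obtain ⟨hε, hC, hv⟩ := hv
  by_cases hab : a = b
  · subst hab; rw [dist_self]; positivity
  · refine (hv u v a b hu hw hab).1.trans ?_
    have hnt : ¬ Tendsto (fun n => gromov d 1 (u n) (v n)) atTop atTop := by
      intro h
      exact hab (bd.conv_unique v a b ((bd.conv_iff u v a hu).2 h) hw)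
    have h1 : R ≤ seqGromov d u v := by
      refine le_liminf_of_le ?_ hR
      rw [Filter.tendsto_atTop] at hnt
      push Not at hnt
      obtain ⟨M, hM⟩ := hnt
      refine IsCoboundedUnder.of_frequently_le (a := M) ?_
      exact hM.mono fun n hn => (le_of_lt (by simpa using hn))
    have : -ε * seqGromov d u v ≤ -ε * R := by nlinarith
    gcongr

end visual

variable [Countable G] [MeasurableSpace G] [MeasurableSingletonClass G]

lemma halfspace {μ : G → ℝ} {P : Measure (ℕ → G)} (hP : IsWalkMeasure μ P) (hμ : ∀ g, 0 ≤ μ g)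
    (htr : ∀ A : Finset G, ∀ᵐ ω ∂P, ∃ N, ∀ m, N ≤ m → walkPos m ω ∉ A)
    (hd : IsMetricFun (greenDist μ)) {δ : ℝ} (hδ : 0 ≤ δ) (hh : IsHyperbolicWith (greenDist μ) δ)
    {c0 : ℝ} (hc0 : 0 ≤ c0)
    (hint : ∀ a b : G, ∀ t, 0 ≤ t → t ≤ greenDist μ a b → ∃ x, vd (greenDist μ) a b t x ≤ c0)
    (p : G) (D : ℝ) :
    P {ω | ∃ n, walkPos n ω ∈ {y | D ≤ gromov (greenDist μ) 1 y p}} ≤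
      ENNReal.ofReal (Real.exp (3 * c0 + 2 * δ) * Real.exp (-D)) := by
  have := hP.1
  set d := greenDist μ with hdd
  by_cases hD0 : D < 0
  · refine prob_le_one.trans ?_
    rw [← ENNReal.ofReal_one, ← Real.exp_add]
    apply ENNReal.ofReal_le_ofReal
    rw [← Real.exp_zero]
    apply Real.exp_le_exp.2
    linarith
  push Not at hD0
  by_cases hDp : d 1 p < D
  · have : {ω : ℕ → G | ∃ n, walkPos n ω ∈ {y | D ≤ gromov d 1 y p}} = ∅ := by
      ext ω
      simp only [mem_ofPred_eq, mem_empty_iff_false, iff_false, not_exists, not_le]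
      intro n
      exact (gr_le hd _ _ _).trans_lt hDp
    rw [this]; simp
  push Not at hDp
  obtain ⟨x, hx⟩ := hint 1 p D hD0 hDp
  obtain ⟨hx1, hx2⟩ := max_le_iff.1 hx
  refine hit_set hP hμ htr x _ _ ?_
  intro y hy
  have hy : D ≤ gromov d 1 y p := hy
  rw [P_hit_exp hP hμ hd, P_hit_exp hP hμ hd, ← ENNReal.ofReal_mul (by positivity), ← Real.exp_add,
    ← Real.exp_add]
  apply ENNReal.ofReal_le_ofReal
  apply Real.exp_le_exp.2
  have hx3 : D - c0 ≤ d x 1 := by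
    have := hd.triangle 1 x p
    rw [hd.symm 1 x] at this
    linarith
  have hg : D - c0 ≤ gromov d 1 p x := by
    unfold gromov
    rw [hd.symm p x, hd.symm p 1]
    linarith
  rw [gr_symm hd] at hy
  have h3 := gr_min hh 1 p x y hg (by linarith)
  unfold gromov at h3
  rw [← hdd, hd.symm 1 y]
  linarith

lemma upper_bound {μ : G → ℝ} {P : Measure (ℕ → G)} (hP : IsWalkMeasure μ P) 
    (hd : IsMetricFun (greenDist μ)) {δ : ℝ} (hδ : 0 ≤ δ) (hh : IsHyperbolicWith (greenDist μ) δ)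
    {K : ℝ} (hK : 0 < K)
    (hhs : ∀ p D, P {ω | ∃ n, walkPos n ω ∈ {y | D ≤ gromov (greenDist μ) 1 y p}} ≤
      ENNReal.ofReal (K * Real.exp (-D)))
    {B : Type*} [MetricSpace B] {bd : BoundaryData G (greenDist μ) B} {ε C : ℝ}
    (hv : IsVisualMetric (greenDist μ) bd ε C)
    {Z : (ℕ → G) → B} (hZ : ∀ᵐ ω ∂P, bd.conv (fun n => walkPos n ω) (Z ω))
    (a : B) (r : ℝ) (hr : 0 < r) :
    P (Z ⁻¹' ball a r) ≤
      ENNReal.ofReal ((K * Real.exp (1 + δ) * C ^ (1/ε)) * r ^ (1/ε)) := by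
  have hC := hv.2.1
  have hε := hv.1
  obtain ⟨u, hu⟩ := bd.conv_surj a
  set R := -(Real.log (C * r)) / ε with hR
  obtain ⟨N, hN⟩ := conv_tail bd hu (R - 1)
  refine le_trans (measure_mono_ae ?_) ((hhs (u N) (R - 1 - δ)).trans ?_)
  · filter_upwards [hZ] with ω hω hb
    have hb : dist (Z ω) a < r := hb
    obtain ⟨n, hn1, hn2⟩ := ((visual_upper hd hv hu hω hb).and (eventually_ge_atTop N)).exists
    refine ⟨n, ?_⟩
    change R - 1 - δ ≤ gromov _ 1 (walkPos n ω) (u N)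
    exact gr_min hh 1 (u n) _ _ hn1 (hN n hn2 N le_rfl)
  · apply ENNReal.ofReal_le_ofReal
    apply le_of_eq
    rw [mul_assoc (K * _), ← Real.mul_rpow hC.le hr.le, Real.rpow_def_of_pos (mul_pos hC hr),
      mul_assoc, ← Real.exp_add]
    congr 2
    rw [hR]; ring

lemma lower_bound {μ : G → ℝ} {P : Measure (ℕ → G)} (hP : IsWalkMeasure μ P) (hμ : ∀ g, 0 ≤ μ g)
    (hd : IsMetricFun (greenDist μ)) (hinv : LeftInvariant (greenDist μ))
    {δ : ℝ} (hδ : 0 ≤ δ) (hh : IsHyperbolicWith (greenDist μ) δ)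
    {c0 : ℝ} (hc0 : 0 ≤ c0)
    (hint : ∀ a b : G, ∀ t, 0 ≤ t → t ≤ greenDist μ a b → ∃ x, vd (greenDist μ) a b t x ≤ c0)
    {D0 : ℝ} (hD0 : 0 ≤ D0)
    (hhs : ∀ p, P {ω | ∃ n, walkPos n ω ∈ {y | D0 ≤ gromov (greenDist μ) 1 y p}} ≤
      ENNReal.ofReal (1/2))
    {B : Type*} [MetricSpace B] {bd : BoundaryData G (greenDist μ) B} {ε C : ℝ}
    (hv : IsVisualMetric (greenDist μ) bd ε C)
    {Z : (ℕ → G) → B} (hZ : ∀ᵐ ω ∂P, bd.conv (fun n => walkPos n ω) (Z ω))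
    (a : B) (r : ℝ) (hr : 0 < r) (hrC : r ≤ C) :
    ENNReal.ofReal ((Real.exp (-(c0 + D0 + 2 * δ) - c0) * (1 / (2 * C)) ^ (1/ε) * (1/2)) * r ^ (1/ε))
      ≤ P (Z ⁻¹' ball a r) := by
  have := hP.1
  have hC := hv.2.1
  have hε := hv.1
  obtain ⟨u, hu⟩ := bd.conv_surj a
  set E := c0 + D0 + 2 * δ with hE
  set T := -(Real.log (r / (2 * C))) / ε + E with hT
  have hq : 0 < r / (2 * C) := by positivity
  have hT0 : 0 ≤ T := by
    have h1 : Real.log (r / (2 * C)) ≤ 0 := by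
      apply Real.log_nonpos hq.le
      rw [div_le_one (by positivity)]; linarith
    have : 0 ≤ -(Real.log (r / (2 * C))) / ε := div_nonneg (by linarith) hε.le
    linarith
  obtain ⟨N, hN⟩ := conv_tail bd hu T
  set p := u N with hp
  have hTp : T ≤ greenDist μ 1 p := (hN N le_rfl N le_rfl).trans (gr_le hd _ _ _)
  obtain ⟨x, hx⟩ := hint 1 p T hT0 hTp
  obtain ⟨hx1, hx2⟩ := max_le_iff.1 hx
  have hx3 : T - c0 ≤ greenDist μ x 1 := by
    have := hd.triangle 1 x p
    rw [hd.symm 1 x] at this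
    linarith
  have hg : T - c0 ≤ gromov (greenDist μ) 1 x p := by
    unfold gromov
    rw [hd.symm p 1]
    linarith
  set W : Set (ℕ → G) := {ω | ∃ n, walkPos n ω ∈ {y | D0 ≤ gromov (greenDist μ) 1 y x⁻¹}} with hW
  have hWm : MeasurableSet W := by
    have : W = ⋃ n, (walkPos n) ⁻¹' {y | D0 ≤ gromov (greenDist μ) 1 y x⁻¹} := by
      ext ω; simp [hW]
    rw [this]
    exact MeasurableSet.iUnion fun n => measurable_walkPos n MeasurableSet.of_discrete
  have hWc : ENNReal.ofReal (1/2) ≤ P Wᶜ := by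
    rw [prob_compl_eq_one_sub hWm]
    have e : ENNReal.ofReal (1/2) = 1 - ENNReal.ofReal (1/2) := by
      rw [← ENNReal.ofReal_one, ← ENNReal.ofReal_sub _ (by norm_num)]
      norm_num
    rw [e]
    exact tsub_le_tsub_left (hhs x⁻¹) 1
  have hsub : P (hitThen 1 x Wᶜ) ≤ P (Z ⁻¹' ball a r) := by
    apply measure_mono_ae
    filter_upwards [hZ] with ω hω hb
    have hb : ω ∈ hitThen 1 x Wᶜ := hb
    simp only [hitThen, mem_iUnion, mem_inter_iff, mem_preimage] at hb
    obtain ⟨⟨l, hl⟩, h1, h2⟩ := hb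
    have hlx := firstHit_walkPos hl h1
    rw [one_mul] at hlx
    have hlow := visual_lower hv hu hω (R := T - E) (by
      filter_upwards [eventually_ge_atTop N, eventually_ge_atTop l.length] with n hn hnl
      obtain ⟨m, rfl⟩ := Nat.exists_eq_add_of_le hnl
      rw [walkPos_add, hlx]
      set z := walkPos m (shf l.length ω) with hz
      have hz1 : gromov (greenDist μ) 1 z x⁻¹ < D0 := by
        by_contra hc
        push Not at hc
        exact h2 ⟨m, hc⟩
      have hz2 : T - c0 - D0 ≤ gromov (greenDist μ) 1 x (x * z) := by
        have e1 : greenDist μ x (x * z) = greenDist μ z 1 := by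
          have := hinv x 1 z
          rw [mul_one] at this
          rw [this, hd.symm]
        have e2 : greenDist μ (x * z) 1 = greenDist μ z x⁻¹ := by
          have := hinv x z x⁻¹
          rw [mul_inv_cancel] at this
          exact this
        have e3 : greenDist μ x⁻¹ 1 = greenDist μ x 1 := by
          have := hinv x x⁻¹ 1
          rw [mul_inv_cancel, mul_one] at this
          rw [← this, hd.symm]
        unfold gromov at hz1 ⊢
        rw [e1, e2]
        rw [e3] at hz1
        linarith
      have h3 := gr_min hh 1 x p (x * z) (r := T - c0 - D0) (by linarith) hz2
      have h4 := gr_min hh 1 p (u (l.length + m)) (x * z) (r := T - c0 - D0 - δ)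
        (by have := hN N le_rfl _ hn; linarith) h3
      linarith)
    change dist (Z ω) a < r
    rw [dist_comm]
    refine hlow.trans_lt ?_
    have : -ε * (T - E) = Real.log (r / (2 * C)) := by
      rw [hT]; field_simp; ring
    rw [this, Real.exp_log hq]
    have : C * (r / (2 * C)) = r / 2 := by field_simp
    rw [this]; linarith
  refine le_trans ?_ hsub
  rw [P_hitThen hP hμ 1 x hWm.compl, P_hit_exp hP hμ hd]
  refine le_trans ?_ (mul_le_mul_right hWc _)
  rw [← ENNReal.ofReal_mul (by positivity)]
  apply ENNReal.ofReal_le_ofReal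
  have e1 : Real.exp (-E - c0) * (1 / (2 * C)) ^ (1/ε) * (1/2) * r ^ (1/ε) =
      Real.exp (-T - c0) * (1/2) := by
    have : (1 / (2 * C)) ^ (1/ε) * r ^ (1/ε) = Real.exp (Real.log (r / (2 * C)) * (1/ε)) := by
      rw [← Real.mul_rpow (by positivity) hr.le, Real.rpow_def_of_pos (by positivity)]
      congr 3; field_simp
    calc _ = Real.exp (-E - c0) * ((1 / (2 * C)) ^ (1/ε) * r ^ (1/ε)) * (1/2) := by ring
      _ = _ := by
        rw [this, ← Real.exp_add]
        congr 2
        rw [hT]; ring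
  rw [e1]
  gcongr
  rw [hd.symm]
  linarith

end final

/-- **Theorem 1.1(ii).**  If the Green metric of a symmetric random walk whose support
generates a non-elementary hyperbolic group belongs to `𝒟(Γ)`, then for every small
enough `ε > 0` the harmonic measure is Ahlfors regular of dimension `1/ε` for any visual
metric of parameter `ε` induced by `d_G` on the boundary. -/
theorem harmonic_measure_ahlfors_regular
    {G : Type*} [Group G] [Countable G] [MeasurableSpace G] [MeasurableSingletonClass G]
    (hG : NonElemHyperbolic G)
    (μ : G → ℝ) (hprob : IsProbDensity μ) (hsymm : IsSymmetric μ) (hgen : GeneratesSupp μ)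
    (hD : MemD (greenDist μ)) :
    ∃ ε₀ : ℝ, 0 < ε₀ ∧
      ∀ ε : ℝ, 0 < ε → ε ≤ ε₀ →
        ∀ (B : Type) [MetricSpace B] [MeasurableSpace B] [BorelSpace B],
          ∀ (bd : BoundaryData G (greenDist μ) B) (C : ℝ),
            IsVisualMetric (greenDist μ) bd ε C →
            ∀ (P : Measure (ℕ → G)) (ν : Measure B),
              IsHarmonicMeasure (greenDist μ) bd μ P ν →
              AhlforsRegularOfDim ν (1 / ε) := by
  obtain ⟨hd, hinv, ⟨δ, hδ, hh⟩, S, hS, hqi⟩ := hD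
  refine ⟨1, one_pos, ?_⟩
  intro ε hε _ B _ _ _ bd C hv P ν hν
  obtain ⟨hP, Z, hZm, hZ, rfl⟩ := hν
  have hμ := hprob.1
  obtain ⟨L, Λ, c, hL, hΛ, hch⟩ := chains_of_qi hS hqi hd
  obtain ⟨c0, hc0, hint⟩ := interpolation hδ hL hΛ hd hh hch
  have htr : ∀ A : Finset G, ∀ᵐ ω ∂P, ∃ N, ∀ m, N ≤ m → walkPos m ω ∉ A := by
    intro A
    filter_upwards [hZ] with ω hω using conv_escape bd hd hω A
  have hhs := halfspace hP hμ htr hd hδ hh hc0 hint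
  set K := Real.exp (3 * c0 + 2 * δ) with hKdef
  have hK : 0 < K := Real.exp_pos _
  obtain ⟨D0, hD0, hKD⟩ : ∃ D0 : ℝ, 0 ≤ D0 ∧ K * Real.exp (-D0) ≤ 1 / 2 := by
    refine ⟨max (Real.log (2 * K)) 0, le_max_right _ _, ?_⟩
    have h1 : Real.exp (-max (Real.log (2 * K)) 0) ≤ Real.exp (-Real.log (2 * K)) :=
      Real.exp_le_exp.2 (neg_le_neg (le_max_left _ _))
    rw [Real.exp_neg (Real.log _), Real.exp_log (by positivity)] at h1
    calc K * _ ≤ K * (2 * K)⁻¹ := by gcongr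
      _ = 1 / 2 := by field_simp
  have hC := hv.2.1
  have hdiam : Metric.diam (Set.univ : Set B) ≤ C := by
    apply Metric.diam_le_of_forall_dist_le hC.le
    intro a _ b _
    obtain ⟨u, hu⟩ := bd.conv_surj a
    obtain ⟨v, hw⟩ := bd.conv_surj b
    have := visual_lower hv hu hw (R := 0) (Eventually.of_forall fun n => gr_nonneg hd _ _ _)
    simpa using this
  set C1 := K * Real.exp (1 + δ) * C ^ (1/ε) with hC1
  set C2 := Real.exp (-(c0 + D0 + 2 * δ) - c0) * (1 / (2 * C)) ^ (1/ε) * (1/2) with hC2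
  have hC1p : 0 < C1 := by positivity
  have hC2p : 0 < C2 := by positivity
  refine ⟨max C1 C2⁻¹, lt_max_of_lt_left hC1p, ?_⟩
  intro b r hr hrd
  rw [Measure.map_apply hZm measurableSet_ball]
  have hrp : 0 ≤ r ^ (1/ε) := by positivity
  constructor
  · refine le_trans (ENNReal.ofReal_le_ofReal ?_) (lower_bound hP hμ hd hinv hδ hh hc0 hint hD0
      (fun p => (hhs p D0).trans (ENNReal.ofReal_le_ofReal hKD)) hv hZ b r hr (hrd.trans hdiam))
    apply mul_le_mul_of_nonneg_right _ hrp
    have := inv_anti₀ (inv_pos.2 hC2p) (le_max_right C1 C2⁻¹)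
    rwa [inv_inv] at this
  · refine le_trans (upper_bound hP hd hδ hh hK hhs hv hZ b r hr) (ENNReal.ofReal_le_ofReal ?_)
    exact mul_le_mul_of_nonneg_right (le_max_left _ _) hrp

end GHM
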